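/- arXiv:1203.2131 — 2 statements merged into one kernel-verified Lean document; each statement's English description precedes it below -/
import Mathlib

section
/- Let m ≥ 1, let t_p, t_q ∈ ℝᵐ with t_p ≠ t_q, and let φ_p, φ_q > 0. Set o = t_p + (√φ_p/(√φ_p + √φ_q))·(t_q − t_p) and r = ‖t_p − t_q‖/(√φ_p + √φ_q). Then r²φ_p/‖o − t_p‖² = 1 and r²φ_q/‖o − t_q‖² = 1, and ‖ι_{o,r}(t_p) − ι_{o,r}(t_q)‖ = ‖t_p − t_q‖/√(φ_p φ_q). (Thus an inversion exists that normalizes two kissing spheres with distinct tangent points to diameter 1, and the Euclidean distance between the normalized tangent points equals ‖t_p − t_q‖/√(φ_p φ_q).) -/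
/-!
Write `a = √φp`, `b = √φq` and `v = tq - tp`. The centre `o` divides the segment from `tp` to `tq`
in the ratio `a : b`, so `tp - o = -(a / (a + b)) • v` and `tq - o = (b / (a + b)) • v`, while
`r = ‖v‖ / (a + b)`. Hence the inversion scales these two vectors by `1 / a ^ 2` and `1 / b ^ 2`.
Both diameters become `1`, and the image points differ by
`-(1 / (a * (a + b)) + 1 / (b * (a + b))) • v = -(1 / (a * b)) • v`.
-/

/-- The inversion with center `o` and radius `r`. -/
noncomputable def inversion {m : ℕ} (o : EuclideanSpace ℝ (Fin m)) (r : ℝ)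
    (x : EuclideanSpace ℝ (Fin m)) : EuclideanSpace ℝ (Fin m) :=
  o + (r ^ 2 / ‖x - o‖ ^ 2) • (x - o)

/-- the explicitly chosen inversion normalizes two kissing spheres with
distinct tangent points to diameter 1, and the Euclidean distance between the
normalized tangent points equals `‖t_p − t_q‖/√(φ_p φ_q)`. -/
theorem normalizing_inversion (m : ℕ) (hm : 1 ≤ m)
    (tp tq : EuclideanSpace ℝ (Fin m)) (htpq : tp ≠ tq)
    (φp φq : ℝ) (hφp : 0 < φp) (hφq : 0 < φq) :
    let o : EuclideanSpace ℝ (Fin m) :=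
      tp + (Real.sqrt φp / (Real.sqrt φp + Real.sqrt φq)) • (tq - tp)
    let r : ℝ := ‖tp - tq‖ / (Real.sqrt φp + Real.sqrt φq)
    r ^ 2 * φp / ‖o - tp‖ ^ 2 = 1 ∧
      r ^ 2 * φq / ‖o - tq‖ ^ 2 = 1 ∧
      ‖inversion o r tp - inversion o r tq‖ = ‖tp - tq‖ / Real.sqrt (φp * φq) := by
  intro o r
  have ha : 0 < Real.sqrt φp := Real.sqrt_pos.2 hφp
  have hb : 0 < Real.sqrt φq := Real.sqrt_pos.2 hφq
  have hv : 0 < ‖tq - tp‖ := norm_pos_iff.2 (sub_ne_zero.2 htpq.symm)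
  have hsp : Real.sqrt φp ^ 2 = φp := Real.sq_sqrt hφp.le
  have hsq : Real.sqrt φq ^ 2 = φq := Real.sq_sqrt hφq.le
  have hr : r = ‖tq - tp‖ / (Real.sqrt φp + Real.sqrt φq) := by
    rw [norm_sub_rev tq tp]
  have ho : o = tp + (Real.sqrt φp / (Real.sqrt φp + Real.sqrt φq)) • (tq - tp) := rfl
  clear_value o r
  rw [norm_sub_rev tp tq, Real.sqrt_mul hφp.le]
  generalize Real.sqrt φp = a at *
  generalize Real.sqrt φq = b at *
  have hab : a + b ≠ 0 := (add_pos ha hb).ne'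
  have hp : tp - o = (-(a / (a + b))) • (tq - tp) := by rw [ho]; module
  have hq : tq - o = (b / (a + b)) • (tq - tp) := by
    have h : b / (a + b) = 1 - a / (a + b) := by field_simp; ring
    rw [ho, h]; module
  have hnp : ‖tp - o‖ = a / (a + b) * ‖tq - tp‖ := by
    rw [hp, norm_smul, norm_neg, Real.norm_of_nonneg (by positivity)]
  have hnq : ‖tq - o‖ = b / (a + b) * ‖tq - tp‖ := by
    rw [hq, norm_smul, Real.norm_of_nonneg (by positivity)]
  refine ⟨?_, ?_, ?_⟩
  · rw [norm_sub_rev, hnp, hr, ← hsp]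
    field_simp
  · rw [norm_sub_rev, hnq, hr, ← hsq]
    field_simp
  · -- The scaling factors at `tp` and `tq` are the reciprocal diameters `1 / a ^ 2` and `1 / b ^ 2`.
    have hcp : r ^ 2 / ‖tp - o‖ ^ 2 = 1 / a ^ 2 := by
      rw [hnp, hr]; field_simp
    have hcq : r ^ 2 / ‖tq - o‖ ^ 2 = 1 / b ^ 2 := by
      rw [hnq, hr]; field_simp
    have hc : 1 / a ^ 2 * (-(a / (a + b))) - 1 / b ^ 2 * (b / (a + b)) = -(1 / (a * b)) := by
      field_simp; ring
    have hd : inversion o r tp - inversion o r tq = (-(1 / (a * b))) • (tq - tp) := by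
      unfold inversion
      rw [hcp, hcq, hp, hq, smul_smul, smul_smul, add_sub_add_left_eq_sub, ← sub_smul, hc]
    rw [hd, norm_smul, norm_neg, Real.norm_of_nonneg (by positivity)]
    ring
end

section
/- Let m ≥ 1 and κ ≠ 0. For a unit vector u ∈ ℝᵐ define Ψ_u = (√2/2 + √2/κ)·(u, 1) ∈ ℝ^{m+1}. Then for all unit vectors u, v ∈ ℝᵐ: ⟨Ψ_u, Ψ_u⟩_{m,1} = 0, and −⟨Ψ_u, Ψ_v⟩_{m,1} = ‖c_u − c_v‖², where c_u = (1/κ + 1/2)·u and c_v = (1/κ + 1/2)·v. (For κ > 0 these are the centers of the unit-diameter spheres tangent to the ball of radius 1/κ centered at the origin at directions u and v, so the Minkowskian distance induced by this embedding of unit kissing spheres around a reference ball of curvature κ equals the Euclidean distance between their centers.) -/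
/-!
Writing `b = 1 / κ + 1 / 2`, the scaling factor of `Ψ_u` is `√2 * b`, so
`⟨Ψ_u, Ψ_v⟩_{m,1} = 2 * b ^ 2 * (⟪u, v⟫ - 1)`. For unit vectors this vanishes at `u = v`, and
its negative is the polarization formula `b ^ 2 * ‖u - v‖ ^ 2 = b ^ 2 * (2 - 2 * ⟪u, v⟫)`.
-/

/-- The Minkowski inner product of signature `(m,1)` on `ℝ^{m+1}`:
`⟨x,y⟩ = x₀y₀ + … + x_{m−1}y_{m−1} − x_m y_m`. -/
def mink (m : ℕ) (x y : Fin (m + 1) → ℝ) : ℝ :=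
  (∑ i : Fin m, x i.castSucc * y i.castSucc) - x (Fin.last m) * y (Fin.last m)

/-- The vector `Ψ_u = (√2/2 + √2/κ)·(u, 1) ∈ ℝ^{m+1}` associated to a unit
direction `u ∈ ℝᵐ` and a curvature `κ`. -/
noncomputable def PsiDir (m : ℕ) (κ : ℝ) (u : EuclideanSpace ℝ (Fin m)) :
    Fin (m + 1) → ℝ := fun i =>
  (Real.sqrt 2 / 2 + Real.sqrt 2 / κ) * (if h : (i : ℕ) < m then u ⟨i, h⟩ else 1)

theorem mink_PsiDir (m : ℕ) (κ : ℝ) (u v : EuclideanSpace ℝ (Fin m)) :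
    mink m (PsiDir m κ u) (PsiDir m κ v) = 2 * (1 / κ + 1 / 2) ^ 2 * (inner ℝ u v - 1) := by
  have h2 : Real.sqrt 2 ^ 2 = 2 := Real.sq_sqrt (by norm_num)
  have hb : (Real.sqrt 2 / 2 + Real.sqrt 2 / κ) ^ 2 = 2 * (1 / κ + 1 / 2) ^ 2 := by
    linear_combination (1 / κ + 1 / 2) ^ 2 * h2
  have hi : inner ℝ u v = ∑ i, u i * v i := by
    simp [PiLp.inner_apply, mul_comm]
  rw [← hb, hi, mul_sub, Finset.mul_sum]
  simp only [mink, PsiDir, Fin.val_castSucc, Fin.is_lt, dite_true, Fin.val_last, lt_irrefl,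
    dite_false, Fin.eta]
  congr 1
  · exact Finset.sum_congr rfl fun i _ => by ring
  · ring

/-- for unit vectors `u, v`, `Ψ_u` is a null vector and
`−⟨Ψ_u, Ψ_v⟩_{m,1} = ‖c_u − c_v‖²` where `c_u = (1/κ + 1/2)·u` is the center of the
unit-diameter sphere tangent to the reference ball of curvature `κ` at direction `u`. -/
theorem unit_kissing_spheres_euclidean (m : ℕ) (hm : 1 ≤ m) (κ : ℝ) (hκ : κ ≠ 0)
    (u v : EuclideanSpace ℝ (Fin m)) (hu : ‖u‖ = 1) (hv : ‖v‖ = 1) :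
    mink m (PsiDir m κ u) (PsiDir m κ u) = 0 ∧
      -(mink m (PsiDir m κ u) (PsiDir m κ v)) =
        ‖(1 / κ + 1 / 2) • u - (1 / κ + 1 / 2) • v‖ ^ 2 := by
  rw [mink_PsiDir, mink_PsiDir, ← smul_sub, norm_smul, mul_pow, norm_sub_sq_real,
    real_inner_self_eq_norm_sq, hu, hv, Real.norm_eq_abs, sq_abs]
  constructor <;> ring
end
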